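/- The effective Maxwell equations f_{[α₂…α_{p−1},α₁]} = 0 and (√(g̃) f^{β α₁…α_{p−2}})_{,β} = 0 satisfied by a VSI p-form Maxwell field are unchanged by adding a Chern–Simons term to the full Maxwell field equations, except in the case when the Chern–Simons term is linear. -/

import Mathlib

open scoped BigOperators

noncomputable section

namespace VSI

/-! ### Basic setup: tensor fields on an `n`-dimensional coordinate chart -/

/-- A point of an `n`-dimensional coordinate chart. -/
abbrev Pt (n : ℕ) := Fin n → ℝ

/-- A covariant tensor field of rank `k`, given by its components. -/
abbrev TensorField (n k : ℕ) := Pt n → (Fin k → Fin n) → ℝ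

/-- A vector field, given by its components. -/
abbrev VecField (n : ℕ) := Pt n → Fin n → ℝ

/-- A field of `n × n` matrices (e.g. a metric). -/
abbrev MetricField (n : ℕ) := Pt n → Matrix (Fin n) (Fin n) ℝ

/-- Partial derivative of a scalar function along the `a`-th coordinate. -/
def pd {n : ℕ} (f : Pt n → ℝ) (a : Fin n) (x : Pt n) : ℝ :=
  fderiv ℝ f x (Pi.single a 1)

/-- Partial derivative masked to the transverse directions (coordinates `≥ 2`). -/
def pdT {n : ℕ} (f : Pt n → ℝ) (a : Fin n) (x : Pt n) : ℝ :=
  if 2 ≤ (a : ℕ) then pd f a x else 0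

/-- A function on the chart is independent of the coordinate `r` (coordinate number 1). -/
def IndepOfR {n : ℕ} {α : Type*} (f : Pt n → α) : Prop :=
  ∀ x x' : Pt n, (∀ i : Fin n, (i : ℕ) ≠ 1 → x i = x' i) → f x = f x'

/-- A smooth symmetric metric of Lorentzian signature `(-,+,…,+)`. -/
def IsLorentzMetric {n : ℕ} (g : MetricField n) : Prop :=
  (∀ a b, ContDiff ℝ (⊤ : ℕ∞) fun x => g x a b) ∧ (∀ x, (g x).IsSymm) ∧
  (∀ x, ∃ P : Matrix (Fin n) (Fin n) ℝ, IsUnit P.det ∧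
    P.transpose * g x * P = Matrix.diagonal fun i : Fin n => if (i : ℕ) = 0 then (-1 : ℝ) else 1)

/-- Metric pairing of two vectors at a point. -/
def gdot {n : ℕ} (g : MetricField n) (x : Pt n) (X Y : Fin n → ℝ) : ℝ :=
  ∑ a, ∑ b, g x a b * X a * Y b

/-- Index lowering of a vector field. -/
def lower {n : ℕ} (g : MetricField n) (ℓ : VecField n) (x : Pt n) (a : Fin n) : ℝ :=
  ∑ b, g x a b * ℓ x b

/-- The 1-form (rank-1 covariant tensor field) associated with a vector field. -/
def lowerField {n : ℕ} (g : MetricField n) (ℓ : VecField n) : TensorField n 1 :=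
  fun x idx => lower g ℓ x (idx 0)

/-- Christoffel symbols `Γ^a_{bc}` of the Levi-Civita connection of `g`. -/
def christoffel {n : ℕ} (g : MetricField n) (x : Pt n) (a b c : Fin n) : ℝ :=
  (1/2) * ∑ d, (g x)⁻¹ a d *
    (pd (fun y => g y d c) b x + pd (fun y => g y b d) c x - pd (fun y => g y b c) d x)

/-- Covariant derivative of a covariant tensor field; the new (derivative) index is
the first index of the result. -/
def covD {n k : ℕ} (g : MetricField n) (T : TensorField n k) : TensorField n (k+1) :=
  fun x idx =>
    pd (fun y => T y fun m => idx m.succ) (idx 0) x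
    - ∑ m : Fin k, ∑ e : Fin n,
        christoffel g x e (idx 0) (idx m.succ) * T x (Function.update (fun m' => idx m'.succ) m e)

/-- Iterated covariant derivative. -/
def covDIter {n k : ℕ} (g : MetricField n) (T : TensorField n k) : (I : ℕ) → TensorField n (k + I)
  | 0 => T
  | I + 1 => covD g (covDIter g T I)

/-! ### Scalar polynomial invariants and tensor concomitants -/

/-- A scheme describing a polynomial concomitant of a rank-`k` tensor field: a full
metric contraction of a tensor product of covariant derivatives (of orders `ord j`)
of the field, with `r` free indices left over.  `m` is the number of contracted
index pairs; `slots` enumerates all index slots of the tensor product. -/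
structure ConcomScheme (k r : ℕ) where
  N : ℕ
  hN : 0 < N
  ord : Fin N → ℕ
  m : ℕ
  slots : ((Fin m × Bool) ⊕ Fin r) ≃ (Σ j : Fin N, Fin (k + ord j))

/-- The value of a concomitant scheme: all contracted index pairs are contracted with
the inverse metric. -/
def ConcomScheme.value {k r : ℕ} (S : ConcomScheme k r) {n : ℕ} (g : MetricField n)
    (T : TensorField n k) : TensorField n r := fun x free =>
  ∑ φ : Fin S.m × Bool → Fin n,
    (∏ i : Fin S.m, (g x)⁻¹ (φ (i, false)) (φ (i, true))) *
    ∏ j : Fin S.N, covDIter g T (S.ord j) x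
      (fun s => Sum.elim φ free (S.slots.symm ⟨j, s⟩))

/-- All scalar polynomial invariants constructed from `T` and its covariant
derivatives up to order `I` vanish. -/
def IsVSIUpTo {n k : ℕ} (g : MetricField n) (T : TensorField n k) (I : ℕ) : Prop :=
  ∀ S : ConcomScheme k 0, (∀ j, S.ord j ≤ I) → ∀ x v, S.value g T x v = 0

/-- All scalar polynomial invariants of arbitrary order vanish. -/
def IsVSI {n k : ℕ} (g : MetricField n) (T : TensorField n k) : Prop :=
  ∀ I : ℕ, IsVSIUpTo g T I

/-- All zeroth order scalar polynomial invariants of `T` vanish at the point `x`. -/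
def IsVSI0At {n k : ℕ} (g : MetricField n) (T : TensorField n k) (x : Pt n) : Prop :=
  ∀ S : ConcomScheme k 0, (∀ j, S.ord j = 0) → ∀ v, S.value g T x v = 0

/-- A rank-`r` tensor field `G` is (polynomially) constructed from `T`, its covariant
derivatives of arbitrary order and the metric. -/
def IsConstructedFrom {n k r : ℕ} (g : MetricField n) (T : TensorField n k)
    (G : TensorField n r) : Prop :=
  G ∈ Submodule.span ℝ {G' : TensorField n r | ∃ S : ConcomScheme k r, G' = S.value g T}

/-- A symmetric-2-tensor "correction" to the standard electromagnetic energy-momentum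
tensor: constructed from `T` and its covariant derivatives, where each monomial either
contains at least three factors of the field or at least one covariant derivative
(i.e. it comes from a non-Maxwellian term of a generalized electrodynamics). -/
def IsCorrectionTensor {n k : ℕ} (g : MetricField n) (T : TensorField n k)
    (Tc : TensorField n 2) : Prop :=
  Tc ∈ Submodule.span ℝ {G : TensorField n 2 |
    ∃ S : ConcomScheme k 2, (3 ≤ S.N ∨ ∃ j, 1 ≤ S.ord j) ∧ G = S.value g T}

/-! ### p-forms, type N, Lie derivative -/

def IsAlternating {n k : ℕ} (T : TensorField n k) : Prop :=
  ∀ (x : Pt n) (idx : Fin k → Fin n) (σ : Equiv.Perm (Fin k)),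
    T x (idx ∘ σ) = ((Equiv.Perm.sign σ : ℤ) : ℝ) * T x idx

def IsSmoothT {n k : ℕ} (T : TensorField n k) : Prop :=
  ∀ idx, ContDiff ℝ (⊤ : ℕ∞) fun x => T x idx

/-- A smooth differential form (totally antisymmetric covariant tensor field). -/
def IsFormField {n k : ℕ} (T : TensorField n k) : Prop :=
  IsSmoothT T ∧ IsAlternating T

def IsSmoothVec {n : ℕ} (ℓ : VecField n) : Prop :=
  ∀ a, ContDiff ℝ (⊤ : ℕ∞) fun x => ℓ x a

/-- A (nowhere vanishing, smooth) null vector field. -/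
def IsNullField {n : ℕ} (g : MetricField n) (ℓ : VecField n) : Prop :=
  IsSmoothVec ℓ ∧ (∀ x, ℓ x ≠ 0) ∧ ∀ x, gdot g x (ℓ x) (ℓ x) = 0

/-- `ℓ^a F_{a b₁ … b_{p-1}} = 0`. -/
def ContractsFirstZero {n p : ℕ} [NeZero p] (ℓ : VecField n) (F : TensorField n p) : Prop :=
  ∀ (x : Pt n) (v : Fin p → Fin n), (∑ a, ℓ x a * F x (Function.update v 0 a)) = 0

/-- `ℓ_{[a} F_{b₁ … b_p]} = 0`. -/
def WedgeWithZero {n p : ℕ} (g : MetricField n) (ℓ : VecField n) (F : TensorField n p) : Prop :=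
  ∀ (x : Pt n) (idx : Fin (p+1) → Fin n),
    (∑ σ : Equiv.Perm (Fin (p+1)), ((Equiv.Perm.sign σ : ℤ) : ℝ) *
      (lower g ℓ x (idx (σ 0)) * F x (fun m => idx (σ m.succ)))) = 0

/-- The `p`-form `F` is of type N with multiple null direction `ℓ`. -/
def IsTypeN {n p : ℕ} [NeZero p] (g : MetricField n) (F : TensorField n p)
    (ℓ : VecField n) : Prop :=
  IsNullField g ℓ ∧ ContractsFirstZero ℓ F ∧ WedgeWithZero g ℓ F

/-- Lie derivative of a covariant tensor field along a vector field. -/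
def lieD {n k : ℕ} (ℓ : VecField n) (T : TensorField n k) : TensorField n k :=
  fun x idx =>
    (∑ a, ℓ x a * pd (fun y => T y idx) a x)
    + ∑ m : Fin k, ∑ a, pd (fun y => ℓ y a) (idx m) x * T x (Function.update idx m a)

/-! ### Optical properties: geodesic, Kundt -/

/-- `∇_b ℓ_a` (first index is the derivative index). -/
def nablaLow {n : ℕ} (g : MetricField n) (ℓ : VecField n) (x : Pt n) (b a : Fin n) : ℝ :=
  covD g (lowerField g ℓ) x ![b, a]

/-- `ℓ` is geodesic: `ℓ^b ∇_b ℓ_a ∝ ℓ_a`. -/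
def IsGeodesicField {n : ℕ} (g : MetricField n) (ℓ : VecField n) : Prop :=
  ∀ x, ∃ c : ℝ, ∀ a, (∑ b, ℓ x b * nablaLow g ℓ x b a) = c * lower g ℓ x a

/-- `ℓ` is affinely parameterized: `ℓ^b ∇_b ℓ_a = 0`. -/
def IsAffinelyParam {n : ℕ} (g : MetricField n) (ℓ : VecField n) : Prop :=
  ∀ x a, (∑ b, ℓ x b * nablaLow g ℓ x b a) = 0

/-- `ℓ` is a Kundt null vector field: null, geodesic and with vanishing optical matrix
(expansion-free, shear-free and twist-free). -/
def IsKundt {n : ℕ} (g : MetricField n) (ℓ : VecField n) : Prop :=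
  IsNullField g ℓ ∧ IsGeodesicField g ℓ ∧
  ∀ (x : Pt n) (X Y : Fin n → ℝ), gdot g x X (ℓ x) = 0 → gdot g x Y (ℓ x) = 0 →
    (∑ a, ∑ b, X a * Y b * nablaLow g ℓ x b a) = 0

/-! ### Curvature -/

/-- Fully lowered Riemann tensor `R_{abcd}`. -/
def riemann {n : ℕ} (g : MetricField n) : TensorField n 4 := fun x idx =>
  ∑ e, g x (idx 0) e *
    (pd (fun y => christoffel g y e (idx 3) (idx 1)) (idx 2) x
     - pd (fun y => christoffel g y e (idx 2) (idx 1)) (idx 3) x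
     + ∑ f', (christoffel g x e (idx 2) f' * christoffel g x f' (idx 3) (idx 1)
            - christoffel g x e (idx 3) f' * christoffel g x f' (idx 2) (idx 1)))

def ricci {n : ℕ} (g : MetricField n) (x : Pt n) (b d : Fin n) : ℝ :=
  ∑ a, ∑ c, (g x)⁻¹ a c * riemann g x ![a, b, c, d]

def ricciScalar {n : ℕ} (g : MetricField n) (x : Pt n) : ℝ :=
  ∑ b, ∑ d, (g x)⁻¹ b d * ricci g x b d

def tracelessRicci {n : ℕ} (g : MetricField n) : TensorField n 2 := fun x idx =>
  ricci g x (idx 0) (idx 1) - ricciScalar g x / (n : ℝ) * g x (idx 0) (idx 1)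

/-- Weyl tensor `C_{abcd}` (for `n ≥ 3`). -/
def weyl {n : ℕ} (g : MetricField n) : TensorField n 4 := fun x idx =>
  riemann g x idx
  - (1 / ((n : ℝ) - 2)) *
      (g x (idx 0) (idx 2) * ricci g x (idx 3) (idx 1)
       - g x (idx 0) (idx 3) * ricci g x (idx 2) (idx 1)
       - g x (idx 1) (idx 2) * ricci g x (idx 3) (idx 0)
       + g x (idx 1) (idx 3) * ricci g x (idx 2) (idx 0))
  + (1 / (((n : ℝ) - 1) * ((n : ℝ) - 2))) * ricciScalar g x *
      (g x (idx 0) (idx 2) * g x (idx 3) (idx 1) - g x (idx 0) (idx 3) * g x (idx 2) (idx 1))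

/-! ### Null frames, boost weights, algebraic types -/

/-- A null frame at a point: two null vectors `e 0 = ℓ`, `e 1 = n` with `ℓ·n = 1`, and
orthonormal spacelike vectors `e i`, `i ≥ 2`, orthogonal to both. -/
structure NullFrameAt {n : ℕ} [NeZero n] (g : MetricField n) (x : Pt n) where
  e : Fin n → Fin n → ℝ
  h00 : gdot g x (e 0) (e 0) = 0
  h11 : gdot g x (e 1) (e 1) = 0
  h01 : gdot g x (e 0) (e 1) = 1
  h0i : ∀ i : Fin n, 2 ≤ (i : ℕ) → gdot g x (e 0) (e i) = 0
  h1i : ∀ i : Fin n, 2 ≤ (i : ℕ) → gdot g x (e 1) (e i) = 0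
  hij : ∀ i j : Fin n, 2 ≤ (i : ℕ) → 2 ≤ (j : ℕ) →
    gdot g x (e i) (e j) = (if i = j then 1 else 0)

/-- Boost weight of a frame multi-index: `+1` for each contraction with `ℓ = e 0`,
`-1` for each contraction with `n = e 1`. -/
def bw {n k : ℕ} (a : Fin k → Fin n) : ℤ :=
  ((Finset.univ.filter fun m => (a m : ℕ) = 0).card : ℤ)
  - ((Finset.univ.filter fun m => (a m : ℕ) = 1).card : ℤ)

/-- Frame components of a covariant tensor. -/
def frameComp {n k : ℕ} (T : TensorField n k) (e : Fin n → Fin n → ℝ) (x : Pt n)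
    (a : Fin k → Fin n) : ℝ :=
  ∑ idx : Fin k → Fin n, T x idx * ∏ m, e (a m) (idx m)

/-- The tensor field `T` has boost order at most `b` with respect to the null
direction `ℓ`: in any null frame containing `ℓ`, all frame components of boost
weight `> b` vanish.  `b = 0` is the aligned type II condition, `b = -1` type III. -/
def BoostOrderLE {n k : ℕ} [NeZero n] (g : MetricField n) (ℓ : VecField n)
    (T : TensorField n k) (b : ℤ) : Prop :=
  ∀ (x : Pt n) (fr : NullFrameAt g x), fr.e 0 = ℓ x →
    ∀ a : Fin k → Fin n, b < bw a → frameComp T fr.e x a = 0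

/-- `g` is a degenerate Kundt metric with Kundt null direction `ℓ`: `ℓ` is Kundt and
the Riemann tensor together with its covariant derivatives of all orders is of aligned
type II with respect to `ℓ`. -/
def IsDegenerateKundt {n : ℕ} [NeZero n] (g : MetricField n) (ℓ : VecField n) : Prop :=
  IsKundt g ℓ ∧ ∀ I : ℕ, BoostOrderLE g ℓ (covDIter g (riemann g) I) 0

/-! ### Exterior derivative, Hodge dual, Maxwell equations -/

/-- Exterior derivative (components, no normalization factor). -/
def extD {n k : ℕ} (F : TensorField n k) : TensorField n (k+1) := fun x idx =>
  ∑ m : Fin (k+1), (-1 : ℝ) ^ (m : ℕ) *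
    pd (fun y => F y fun i => idx (m.succAbove i)) (idx m) x

/-- Sign of a self-map of `Fin k` (0 if not bijective). -/
def permSign {k : ℕ} (f : Fin k → Fin k) : ℤ :=
  if h : Function.Bijective f then Equiv.Perm.sign (Equiv.ofBijective f h) else 0

/-- Raise all indices of a covariant tensor with the inverse metric. -/
def raiseAll {n k : ℕ} (g : MetricField n) (T : TensorField n k) : TensorField n k :=
  fun x idx => ∑ jdx : Fin k → Fin n, (∏ m, (g x)⁻¹ (idx m) (jdx m)) * T x jdx

/-- Hodge dual of a `p`-form (`p + q = n`), via the metric volume element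
`√|det g| ε_{a₁…aₙ}`. -/
def hodge {n p q : ℕ} (h : p + q = n) (g : MetricField n) (F : TensorField n p) :
    TensorField n q := fun x idx =>
  (1 / (Nat.factorial p : ℝ)) *
    ∑ a : Fin p → Fin n, raiseAll g F x a *
      (Real.sqrt |(g x).det| *
        ((permSign fun i => Fin.append a idx (Fin.cast h.symm i) : ℤ) : ℝ))

/-- Source-free Maxwell equations `dF = 0 = d*F` for a `p`-form (`p + q = n`). -/
def MaxwellEqs {n p q : ℕ} (h : p + q = n) (g : MetricField n) (F : TensorField n p) : Prop :=
  (∀ x idx, extD F x idx = 0) ∧ (∀ x idx, extD (hodge h g F) x idx = 0)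

/-! ### Wedge products -/

def wedgeP {n a b : ℕ} (F : TensorField n a) (G : TensorField n b) : TensorField n (a+b) :=
  fun x idx => ∑ σ : Equiv.Perm (Fin (a+b)), ((Equiv.Perm.sign σ : ℤ) : ℝ) *
    (F x fun i => idx (σ (Fin.castAdd b i))) * (G x fun j => idx (σ (Fin.natAdd a j)))

def wedgePow {n p : ℕ} (F : TensorField n p) : (k : ℕ) → TensorField n (p * k)
  | 0 => fun _ _ => 1
  | k + 1 => wedgeP (wedgePow F k) F

def castT {n a b : ℕ} (h : a = b) (T : TensorField n a) : TensorField n b :=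
  fun x idx => T x fun i => idx (Fin.cast h i)

/-! ### Degenerate Kundt metrics in adapted coordinates -/

/-- The Kundt metric `ds² = 2 du (dr + H du + W_α dx^α) + g_{αβ} dx^α dx^β` in
coordinates `(u, r, x^α) = (x⁰, x¹, x^{α≥2})`. -/
def kundtMetric {n : ℕ} (H : Pt n → ℝ) (W : Pt n → Fin n → ℝ) (hT : MetricField n) :
    MetricField n := fun x => Matrix.of fun a b =>
  if (a : ℕ) = 0 ∧ (b : ℕ) = 0 then 2 * H x
  else if ((a : ℕ) = 0 ∧ (b : ℕ) = 1) ∨ ((a : ℕ) = 1 ∧ (b : ℕ) = 0) then 1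
  else if (a : ℕ) = 0 then W x b
  else if (b : ℕ) = 0 then W x a
  else if (a : ℕ) = 1 ∨ (b : ℕ) = 1 then 0
  else hT x a b

/-- A transverse (Riemannian) metric `g_{αβ}(u,x)`, stored as an `n×n` matrix padded
by the identity on the coordinates `u, r`. -/
def IsTransverseMetric {n : ℕ} (hT : MetricField n) : Prop :=
  (∀ (x : Pt n) (a b : Fin n), ((a : ℕ) < 2 ∨ (b : ℕ) < 2) → hT x a b = (if a = b then 1 else 0)) ∧
  (∀ x, (hT x).IsSymm) ∧ (∀ a b, ContDiff ℝ (⊤ : ℕ∞) fun x => hT x a b) ∧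
  IndepOfR hT ∧ (∀ x, (hT x).PosDef)

/-- Data of a degenerate Kundt metric: `W_α = r W¹_α + W⁰_α`,
`H = r² H² + r H¹ + H⁰`, transverse metric `hT`. -/
structure DegKundtData (n : ℕ) where
  H2 : Pt n → ℝ
  H1 : Pt n → ℝ
  H0 : Pt n → ℝ
  W1 : Pt n → Fin n → ℝ
  W0 : Pt n → Fin n → ℝ
  hT : MetricField n

def DegKundtData.Hfun {n : ℕ} [NeZero n] (D : DegKundtData n) : Pt n → ℝ :=
  fun z => (z 1)^2 * D.H2 z + z 1 * D.H1 z + D.H0 z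

def DegKundtData.Wfun {n : ℕ} [NeZero n] (D : DegKundtData n) : Pt n → Fin n → ℝ :=
  fun z b => z 1 * D.W1 z b + D.W0 z b

/-- The degenerate Kundt metric built from the data. -/
def DegKundtData.metric {n : ℕ} [NeZero n] (D : DegKundtData n) : MetricField n :=
  kundtMetric D.Hfun D.Wfun D.hT

/-- Regularity and shape conditions on the degenerate Kundt data: the metric functions
depend only on `(u, x^α)` and are smooth, `W`'s are transverse. -/
def DegKundtData.Regular {n : ℕ} (D : DegKundtData n) : Prop :=
  IsTransverseMetric D.hT ∧
  IndepOfR D.H2 ∧ IndepOfR D.H1 ∧ IndepOfR D.H0 ∧ IndepOfR D.W1 ∧ IndepOfR D.W0 ∧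
  ContDiff ℝ (⊤ : ℕ∞) D.H2 ∧ ContDiff ℝ (⊤ : ℕ∞) D.H1 ∧ ContDiff ℝ (⊤ : ℕ∞) D.H0 ∧
  (∀ a, ContDiff ℝ (⊤ : ℕ∞) fun x => D.W1 x a) ∧ (∀ a, ContDiff ℝ (⊤ : ℕ∞) fun x => D.W0 x a) ∧
  (∀ (x : Pt n) (a : Fin n), (a : ℕ) < 2 → D.W1 x a = 0) ∧ (∀ (x : Pt n) (a : Fin n), (a : ℕ) < 2 → D.W0 x a = 0)

/-- The `(q+1)`-form `du ∧ f` built from a transverse `q`-form `f`. -/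
def duWedge {n q : ℕ} (f : TensorField n q) : TensorField n (q+1) := fun x idx =>
  ∑ m : Fin (q+1), (-1 : ℝ) ^ (m : ℕ) * (if (idx m : ℕ) = 0 then 1 else 0) *
    f x (fun i => idx (m.succAbove i))

/-- `f_{[α₂…α_p , α₁]} = 0`: `f` is closed in the transverse geometry. -/
def TransClosed {n q : ℕ} (f : TensorField n q) : Prop :=
  ∀ (x : Pt n) (v : Fin (q+1) → Fin n), (∀ i, 2 ≤ (v i : ℕ)) →
    (∑ m : Fin (q+1), (-1 : ℝ) ^ (m : ℕ) *
      pd (fun y => f y fun i => v (m.succAbove i)) (v m) x) = 0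

/-- `(√g̃ f^{β α₁…α_{p-2}})_{,β} = 0`: `f` is co-closed in the transverse geometry. -/
def TransCoclosed {n q : ℕ} [NeZero q] (hT : MetricField n) (f : TensorField n q) : Prop :=
  ∀ (x : Pt n) (v : Fin q → Fin n),
    (∑ b : Fin n, pd (fun y =>
      Real.sqrt (hT y).det * raiseAll hT f y (Function.update v 0 b)) b x) = 0

/-! ### Transverse curvature -/

def christoffelT {n : ℕ} (h : MetricField n) (x : Pt n) (a b c : Fin n) : ℝ :=
  (1/2) * ∑ d, (h x)⁻¹ a d *
    (pdT (fun y => h y d c) b x + pdT (fun y => h y b d) c x - pdT (fun y => h y b c) d x)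

def covDT {n k : ℕ} (h : MetricField n) (T : TensorField n k) : TensorField n (k+1) :=
  fun x idx =>
    pdT (fun y => T y fun m => idx m.succ) (idx 0) x
    - ∑ m : Fin k, ∑ e : Fin n,
        christoffelT h x e (idx 0) (idx m.succ) * T x (Function.update (fun m' => idx m'.succ) m e)

def riemannT {n : ℕ} (h : MetricField n) : TensorField n 4 := fun x idx =>
  ∑ e, h x (idx 0) e *
    (pdT (fun y => christoffelT h y e (idx 3) (idx 1)) (idx 2) x
     - pdT (fun y => christoffelT h y e (idx 2) (idx 1)) (idx 3) x
     + ∑ f', (christoffelT h x e (idx 2) f' * christoffelT h x f' (idx 3) (idx 1)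
            - christoffelT h x e (idx 3) f' * christoffelT h x f' (idx 2) (idx 1)))

def ricciT {n : ℕ} (h : MetricField n) (x : Pt n) (b d : Fin n) : ℝ :=
  ∑ a, ∑ c, (h x)⁻¹ a c * riemannT h x ![a, b, c, d]

def ricciScalarT {n : ℕ} (h : MetricField n) (x : Pt n) : ℝ :=
  ∑ b, ∑ d, (h x)⁻¹ b d * ricciT h x b d

/-- A covector field as a rank-1 tensor field. -/
def oneForm {n : ℕ} (W : Pt n → Fin n → ℝ) : TensorField n 1 := fun x idx => W x (idx 0)

/-- Transverse covariant derivative `∇̃_b V_a` (`= V_{a||b}`). -/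
def nablaT {n : ℕ} (h : MetricField n) (V : TensorField n 1) (x : Pt n) (b a : Fin n) : ℝ :=
  covDT h V x ![b, a]

/-- Second transverse covariant derivative `∇̃_c ∇̃_b V_a`. -/
def nablaT2 {n : ℕ} (h : MetricField n) (V : TensorField n 1) (x : Pt n) (c b a : Fin n) : ℝ :=
  covDT h (covDT h V) x ![c, b, a]

/-- Transverse divergence `V^{α}{}_{||α}`. -/
def divT {n : ℕ} (h : MetricField n) (V : TensorField n 1) (x : Pt n) : ℝ :=
  ∑ b, ∑ c, (h x)⁻¹ b c * nablaT h V x b c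

def gradT {n : ℕ} (f : Pt n → ℝ) : TensorField n 1 := fun x idx => pdT f (idx 0) x

/-- Transverse Laplacian. -/
def laplaceT {n : ℕ} (h : MetricField n) (f : Pt n → ℝ) (x : Pt n) : ℝ :=
  ∑ a, ∑ b, (h x)⁻¹ a b * covDT h (gradT f) x ![a, b]

def lnSqrtDet {n : ℕ} (h : MetricField n) (y : Pt n) : ℝ :=
  Real.log (Real.sqrt (h y).det)

/-! ### Electromagnetic energy-momentum tensor -/

/-- Standard energy-momentum tensor of a `(q+1)`-form Maxwell field:
`T_{ab} = (1/q!) (F_{a c⃗} F_b{}^{c⃗} - (1/(2(q+1))) g_{ab} F_{c⃗}F^{c⃗})`. -/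
def emTensor {n q : ℕ} (g : MetricField n) (F : TensorField n (q+1)) (x : Pt n)
    (a b : Fin n) : ℝ :=
  (1 / (Nat.factorial q : ℝ)) *
    ((∑ v : Fin q → Fin n, F x (Fin.cons a v) *
        ∑ w : Fin q → Fin n, (∏ i, (g x)⁻¹ (v i) (w i)) * F x (Fin.cons b w))
     - (1 / (2 * ((q : ℝ) + 1))) * g x a b *
        ∑ v : Fin (q+1) → Fin n, F x v * raiseAll g F x v)

/-! ### Coordinate transformations (for adapted coordinates) -/

/-- Jacobian `∂ψ^a/∂y^b` of a coordinate change. -/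
def jac {n : ℕ} (ψ : Pt n → Pt n) (y : Pt n) (a b : Fin n) : ℝ :=
  pd (fun z => ψ z a) b y

/-- Pullback of the metric along the coordinate change `ψ` (from new to old coords). -/
def pullMetric {n : ℕ} (g : MetricField n) (ψ : Pt n → Pt n) : MetricField n :=
  fun y => Matrix.of fun μ ν => ∑ a, ∑ b, jac ψ y a μ * jac ψ y b ν * g (ψ y) a b

/-- Pullback of a covariant tensor field along `ψ`. -/
def pullForm {n p : ℕ} (F : TensorField n p) (ψ : Pt n → Pt n) : TensorField n p :=
  fun y idx => ∑ jdx : Fin p → Fin n, (∏ m, jac ψ y (jdx m) (idx m)) * F (ψ y) jdx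

/-! ### Parallelly transported adapted frames -/

/-- A null frame field containing `ℓ`, parallelly transported along `ℓ` and adapted
(`M^i_{jk} = 0`). -/
structure AdaptedPTFrame {n : ℕ} [NeZero n] (g : MetricField n) (ℓ : VecField n) where
  fr : ∀ x : Pt n, NullFrameAt g x
  aligned : ∀ x, (fr x).e 0 = ℓ x
  parallel : ∀ (x : Pt n) (a c : Fin n),
    (∑ b, ℓ x b * (pd (fun y => (fr y).e a c) b x
      + ∑ d, christoffel g x c b d * (fr x).e a d)) = 0
  adapted : ∀ (x : Pt n) (i j k : Fin n), 2 ≤ (i : ℕ) → 2 ≤ (j : ℕ) → 2 ≤ (k : ℕ) →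
    (∑ a, ∑ b, covD g (lowerField g fun z => (fr z).e j) x ![b, a]
      * (fr x).e i a * (fr x).e k b) = 0

/-! ### Explicit Petrov type III solutions -/

/-- The type III vacuum metric of Petrov,
`ds² = 2 du (dr + ½(xr − x eˣ) du) + eˣ(dx² + e^{2u} dy²)`, in coordinates
`(u,r,x,y)`. -/
def petrovG : MetricField 4 := fun z => Matrix.of fun a b =>
  if a = 0 ∧ b = 0 then z 2 * z 1 - z 2 * Real.exp (z 2)
  else if (a = 0 ∧ b = 1) ∨ (a = 1 ∧ b = 0) then 1
  else if a = 2 ∧ b = 2 then Real.exp (z 2)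
  else if a = 3 ∧ b = 3 then Real.exp (z 2 + 2 * z 0)
  else 0

/-- The same metric with the electromagnetic backreaction term
`−2κ₀ eˣ c(u)²` included in `2H`. -/
def petrovEM (κ₀ : ℝ) (c : ℝ → ℝ) : MetricField 4 := fun z => Matrix.of fun a b =>
  if a = 0 ∧ b = 0 then z 2 * z 1 - z 2 * Real.exp (z 2) - 2 * κ₀ * Real.exp (z 2) * (c (z 0))^2
  else if (a = 0 ∧ b = 1) ∨ (a = 1 ∧ b = 0) then 1
  else if a = 2 ∧ b = 2 then Real.exp (z 2)
  else if a = 3 ∧ b = 3 then Real.exp (z 2 + 2 * z 0)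
  else 0

/-- The null direction `ℓ = ∂_r`. -/
def ellR : VecField 4 := fun _ a => if a = 1 then 1 else 0

/-- The transverse covector of the VSI Maxwell field (4). -/
def petrovA (c : ℝ → ℝ) (z : Pt 4) : Fin 4 → ℝ := fun a =>
  if a = 2 then -(Real.exp (z 2 / 2) * c (z 0) * Real.cos (z 3 * Real.exp (z 0) / 2))
  else if a = 3 then Real.exp (z 2 / 2) * c (z 0) * Real.exp (z 0) * Real.sin (z 3 * Real.exp (z 0) / 2)
  else 0

/-- The Maxwell 2-form
`F = e^{x/2} c(u) du ∧ (−cos(y eᵘ/2) dx + eᵘ sin(y eᵘ/2) dy)`. -/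
def petrovF (c : ℝ → ℝ) : TensorField 4 2 := fun z idx =>
  (if idx 0 = 0 then petrovA c z (idx 1) else 0)
  - (if idx 1 = 0 then petrovA c z (idx 0) else 0)

/-!
For `F = du ∧ f` with `f` transverse and independent of `r`, one has `dF = -du ∧ d̃f`, where `d̃`
differentiates along the transverse coordinates only, and `du ∧ ·` is injective on transverse
forms. Since `g⁻¹ du = ∂_r`, the dual `*F` is up to sign the contraction with `∂_r` of the
Levi-Civita dual of `√g̃ f^{α₁…}`: the functions `H` and `W` enter only the `r`-components of the
raised tensor, which this contraction discards, and `|det g| = g̃`. As the Levi-Civita dual does not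
depend on `r`, `d` anticommutes with the contraction, and it acts on that dual as the coordinate
divergence. Finally, a Chern–Simons term of degree at least two in `F` contains `du ∧ du = 0`.
-/

open Equiv Finset

section Arrays

variable {ι : Type*} {k : ℕ}

/-- Total antisymmetry of an array of components, the pointwise form of `IsAlternating`. -/
def IsAlt (T : (Fin k → ι) → ℝ) : Prop :=
  ∀ (idx : Fin k → ι) (σ : Perm (Fin k)), T (idx ∘ σ) = ((Perm.sign σ : ℤ) : ℝ) * T idx

theorem IsAlt.eq_zero_of_not_injective {T : (Fin k → ι) → ℝ} (hT : IsAlt T) {idx : Fin k → ι}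
    (hidx : ¬ Function.Injective idx) : T idx = 0 := by
  obtain ⟨i, j, hij, hne⟩ := Function.not_injective_iff.mp hidx
  have h := hT idx (swap i j)
  rw [comp_swap_eq_update, hij, Function.update_eq_self, ← hij, Function.update_eq_self,
    Perm.sign_swap hne] at h
  push_cast at h
  linarith

theorem IsAlt.apply_insertNth {T : (Fin (k + 1) → ι) → ℝ} (hT : IsAlt T) (m : Fin (k + 1)) (b : ι)
    (c : Fin k → ι) : T (m.insertNth b c) = (-1) ^ (m : ℕ) * T (Fin.cons b c) := by
  rw [← Fin.cons_comp_cycleRange, hT, Fin.sign_cycleRange]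
  push_cast
  rfl

theorem IsAlt.comp_cons {T : (Fin (k + 1) → ι) → ℝ} (hT : IsAlt T) (b : ι) :
    IsAlt fun c => T (Fin.cons b c) := fun c σ => by
  have h : (Fin.cons b (c ∘ σ) : Fin (k + 1) → ι) =
      Fin.cons b c ∘ Perm.decomposeFin.symm (0, σ) := by
    ext i
    cases i using Fin.cases <;> simp
  simp only [h, hT _ (Perm.decomposeFin.symm (0, σ)), Perm.decomposeFin.symm_sign]
  simp

theorem IsAlt.const_mul {T : (Fin k → ι) → ℝ} (hT : IsAlt T) (a : ℝ) : IsAlt fun c => a * T c :=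
  fun c σ => by simp only [hT c σ, mul_left_comm]

theorem IsAlt.sum {κ : Type*} {s : Finset κ} {T : κ → (Fin k → ι) → ℝ} (hT : ∀ b ∈ s, IsAlt (T b)) :
    IsAlt fun c => ∑ b ∈ s, T b c :=
  fun c σ => by simpa only [mul_sum] using sum_congr rfl fun b hb => hT b hb c σ

theorem sum_insertNth [Fintype ι] (m : Fin (k + 1)) (G : (Fin (k + 1) → ι) → ℝ) :
    ∑ w, G w = ∑ b, ∑ c, G (m.insertNth b c) := by
  rw [← Fintype.sum_prod_type', ← (Fin.insertNthEquiv (fun _ => ι) m).sum_comp]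
  rfl

/-- The array got by antisymmetrising the new index `b` of `Q b` against the others, without
normalisation: both `extD` and the wedge product with a covector are of this form. -/
def uncurryAlt (Q : ι → (Fin k → ι) → ℝ) : (Fin (k + 1) → ι) → ℝ := fun idx =>
  ∑ m : Fin (k + 1), (-1) ^ (m : ℕ) * Q (idx m) fun i => idx (m.succAbove i)

theorem uncurryAlt_const_mul (a : ℝ) (Q : ι → (Fin k → ι) → ℝ) :
    uncurryAlt (fun b c => a * Q b c) = fun idx => a * uncurryAlt Q idx := by
  ext idx
  simp only [uncurryAlt, mul_sum, mul_left_comm a]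

theorem uncurryAlt_uncurryAlt (A : ι → ι → (Fin k → ι) → ℝ) (idx : Fin (k + 2) → ι) :
    uncurryAlt (fun a => uncurryAlt (A a)) idx =
      -uncurryAlt (fun b => uncurryAlt fun a => A a b) idx := by
  let swapDeletions : Fin (k + 2) × Fin (k + 1) → Fin (k + 2) × Fin (k + 1) :=
    fun p => (p.1.succAbove p.2, p.2.predAbove p.1)
  have involutive : Function.Involutive swapDeletions := fun p =>
    Prod.ext (Fin.succAbove_succAbove_predAbove _ _) (Fin.predAbove_predAbove_succAbove _ _)
  simp only [uncurryAlt, mul_sum, ← sum_neg_distrib, ← Fintype.sum_prod_type', ← mul_assoc,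
    ← pow_add]
  refine Fintype.sum_equiv involutive.toPerm _ _ fun p => ?_
  simp [swapDeletions, Fin.succAbove_succAbove_predAbove,
    Fin.succAbove_succAbove_succAbove_predAbove, Fin.neg_one_pow_succAbove_add_predAbove]

/-- The exterior product of a covector with a form, without normalisation. -/
def wedge (v : ι → ℝ) (T : (Fin k → ι) → ℝ) : (Fin (k + 1) → ι) → ℝ :=
  uncurryAlt fun b c => v b * T c

theorem wedge_const_mul (v : ι → ℝ) (a : ℝ) (T : (Fin k → ι) → ℝ) :
    wedge v (fun c => a * T c) = fun idx => a * wedge v T idx := by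
  simp only [wedge, ← uncurryAlt_const_mul, mul_left_comm]

theorem wedge_add (v : ι → ℝ) (S T : (Fin k → ι) → ℝ) :
    wedge v (S + T) = wedge v S + wedge v T := by
  ext idx
  simp only [wedge, uncurryAlt, Pi.add_apply, mul_add, sum_add_distrib]

theorem wedge_uncurryAlt (v : ι → ℝ) (Q : ι → (Fin k → ι) → ℝ) :
    wedge v (uncurryAlt Q) = -uncurryAlt fun a => wedge v (Q a) := by
  ext idx
  simp only [Pi.neg_apply, wedge, ← uncurryAlt_uncurryAlt, uncurryAlt_const_mul]

theorem wedge_wedge_self (v : ι → ℝ) (T : (Fin k → ι) → ℝ) : wedge v (wedge v T) = 0 := by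
  refine self_eq_neg.mp ?_
  calc wedge v (wedge v T) = -uncurryAlt fun a => wedge v fun c => v a * T c :=
        wedge_uncurryAlt v _
    _ = -wedge v (wedge v T) := by simp only [wedge_const_mul]; rfl

theorem sum_wedge_apply [Fintype ι] {Q : ι → (Fin (k + 1) → ι) → ℝ} (hQ : ∀ b, IsAlt (Q b))
    (T : (Fin k → ι) → ℝ) :
    ∑ w, wedge (fun b => Q b w) T w = (k + 1) * ∑ b, ∑ c, Q b (Fin.cons b c) * T c := by
  have deletion (m : Fin (k + 1)) :
      ∑ w, (-1) ^ (m : ℕ) * (Q (w m) w * T fun i => w (m.succAbove i)) =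
        ∑ b, ∑ c, Q b (Fin.cons b c) * T c := by
    simp only [sum_insertNth m, (hQ _).apply_insertNth, Fin.insertNth_apply_same,
      Fin.insertNth_apply_succAbove]
    refine sum_congr rfl fun b _ => sum_congr rfl fun c _ => ?_
    rcases neg_one_pow_eq_or ℝ (m : ℕ) with h | h <;> rw [h] <;> ring
  simp only [wedge, uncurryAlt]
  rw [sum_comm]
  simp only [deletion]
  simp

theorem sum_mul_wedge [Fintype ι] {X : (Fin (k + 1) → ι) → ℝ} (hX : IsAlt X) (v : ι → ℝ)
    (T : (Fin k → ι) → ℝ) :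
    ∑ w, X w * wedge v T w = (k + 1) * ∑ b, v b * ∑ c, X (Fin.cons b c) * T c := by
  have h := sum_wedge_apply (fun b => hX.const_mul (v b)) T
  simp only [mul_assoc, ← mul_sum] at h
  rw [← h]
  refine sum_congr rfl fun w _ => ?_
  simp only [wedge, uncurryAlt, mul_sum]
  exact sum_congr rfl fun m _ => by ring

end Arrays

section LeviCivita

theorem permSign_eq_det {n : ℕ} (w : Fin n → Fin n) :
    (permSign w : ℝ) = ((1 : Matrix (Fin n) (Fin n) ℝ).submatrix w id).det := by
  unfold permSign
  split_ifs with h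
  · exact ((Matrix.det_permute (ofBijective w h) 1).trans (by simp)).symm
  · obtain ⟨i, j, hij, hne⟩ :=
      Function.not_injective_iff.mp (mt Finite.injective_iff_bijective.mp h)
    have equal_rows : ((1 : Matrix (Fin n) (Fin n) ℝ).submatrix w id) i =
        ((1 : Matrix (Fin n) (Fin n) ℝ).submatrix w id) j := funext fun l => by
      rw [Matrix.submatrix_apply, hij, Matrix.submatrix_apply]
    rw [Matrix.det_zero_of_row_eq hne equal_rows, Int.cast_zero]

theorem permSign_ne_zero_iff {n : ℕ} {w : Fin n → Fin n} :
    permSign w ≠ 0 ↔ Function.Bijective w := by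
  unfold permSign
  split_ifs with h
  · exact iff_of_true (Units.ne_zero _) h
  · exact iff_of_false (not_not_intro rfl) h

theorem isAlt_permSign {n : ℕ} : IsAlt fun w : Fin n → Fin n => (permSign w : ℝ) := fun w σ => by
  simp only [permSign_eq_det, ← Matrix.det_permute, Matrix.submatrix_submatrix, Function.id_comp]

/-- An antisymmetrisation over `n + 1` indices taking `n` values vanishes: the expansion along its
first column of a determinant with two equal rows. -/
theorem wedge_permSign {n : ℕ} (v : Fin n → ℝ) :
    wedge v (fun w => (permSign w : ℝ)) = 0 := by
  ext w
  let row (b : Fin n) : Fin (n + 1) → ℝ := Fin.cons (v b) ((1 : Matrix (Fin n) (Fin n) ℝ) b)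
  have expansion : (Matrix.of fun m => row (w m)).det = wedge v (fun w => (permSign w : ℝ)) w := by
    rw [Matrix.det_succ_column_zero]
    refine sum_congr rfl fun m _ => ?_
    simp only [permSign_eq_det]
    exact mul_assoc _ _ _
  obtain ⟨i, j, hne, hij⟩ := Fintype.exists_ne_map_eq_of_card_lt w (by simp)
  rw [← expansion, Matrix.det_zero_of_row_eq hne (congrArg row hij), Pi.zero_apply]

variable {n p q : ℕ}

/-- The Levi-Civita symbol `ε_{a₁…aₚ b₁…b_q}`, its `n = p + q` indices split as in `hodge`. -/
def leviCivita (h : p + q = n) (a : Fin p → Fin n) (b : Fin q → Fin n) : ℝ :=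
  permSign fun i => Fin.append a b (Fin.cast h.symm i)

theorem leviCivita_ne_zero_iff {h : p + q = n} {a : Fin p → Fin n} {b : Fin q → Fin n} :
    leviCivita h a b ≠ 0 ↔ Function.Bijective (Fin.append a b) := by
  rw [leviCivita, Int.cast_ne_zero, permSign_ne_zero_iff]
  exact (finCongr h.symm).bijective.of_comp_iff _

theorem isAlt_leviCivita (h : p + q = n) (b : Fin q → Fin n) : IsAlt fun a => leviCivita h a b :=
  fun a σ => by
  subst h
  let σ' : Perm (Fin (p + q)) := finSumFinEquiv.permCongr (Perm.sumCongr σ 1)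
  have append_comp : Fin.append (a ∘ σ) b = Fin.append a b ∘ σ' := by
    ext i
    cases i using Fin.addCases <;> simp [σ', permCongr_apply]
  have sign_eq : Perm.sign σ' = Perm.sign σ := by simp [σ']
  rw [← sign_eq]
  exact (congrArg (fun w => (permSign w : ℝ)) append_comp).trans (isAlt_permSign _ σ')

theorem append_natAdd_succAbove {ι : Type*} (a : Fin p → ι) (b : Fin (q + 1) → ι)
    (m : Fin (q + 1)) (i : Fin (p + q)) :
    Fin.append a b ((Fin.natAdd p m).succAbove i) =
      Fin.append a (fun i => b (m.succAbove i)) i := by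
  cases i using Fin.addCases with
  | left i =>
    have h : (Fin.natAdd p m).succAbove (Fin.castAdd q i) = Fin.castAdd (q + 1) i := by
      ext; simp [Fin.succAbove, Fin.lt_def, apply_ite Fin.val]; grind
    rw [h, Fin.append_left, Fin.append_left]
  | right i =>
    have h : (Fin.natAdd p m).succAbove (Fin.natAdd p i) = Fin.natAdd p (m.succAbove i) := by
      ext; simp [Fin.succAbove, Fin.lt_def, apply_ite Fin.val]; grind
    rw [h, Fin.append_right, Fin.append_right]

theorem append_castAdd_succAbove {ι : Type*} (h : p + 1 + q = p + (q + 1)) (a : Fin (p + 1) → ι)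
    (b : Fin (q + 1) → ι) (m : Fin (p + 1)) (i : Fin (p + 1 + q)) :
    Fin.append a b ((Fin.castAdd (q + 1) m).succAbove i) =
      Fin.append (fun i => a (m.succAbove i)) b (Fin.cast h i) := by
  obtain ⟨i, rfl⟩ := (finCongr h.symm).surjective i
  cases i using Fin.addCases with
  | left i =>
    have h : (Fin.castAdd (q + 1) m).succAbove (Fin.cast h.symm (Fin.castAdd (q + 1) i)) =
        Fin.castAdd (q + 1) (m.succAbove i) := by
      ext; simp [Fin.succAbove, Fin.lt_def, apply_ite Fin.val]
    simp [h]
  | right i =>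
    have h : (Fin.castAdd (q + 1) m).succAbove (Fin.cast h.symm (Fin.natAdd p i)) =
        Fin.natAdd (p + 1) i := by
      ext; simp [Fin.succAbove, Fin.lt_def, apply_ite Fin.val]; grind
    simp [h]

theorem leviCivita_cons (h₁ : p + 1 + q = n) (h₂ : p + (q + 1) = n) (b : Fin n)
    (c : Fin p → Fin n) (j : Fin q → Fin n) :
    leviCivita h₁ (Fin.cons b c) j = (-1) ^ p * leviCivita h₂ c (Fin.cons b j) := by
  subst h₂
  have move : Fin.append c (Fin.cons b j : Fin (q + 1) → Fin (p + (q + 1))) =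
      Fin.insertNth (n := p + q) (Fin.natAdd p (0 : Fin (q + 1))) b (Fin.append c j) := by
    refine Fin.eq_insertNth_iff.mpr ⟨Fin.append_right c _ 0, funext fun i => ?_⟩
    exact append_natAdd_succAbove c (Fin.cons b j : Fin (q + 1) → Fin (p + (q + 1))) 0 i
  have sign_move := isAlt_permSign.apply_insertNth (k := p + q) (Fin.natAdd p (0 : Fin (q + 1))) b
    (Fin.append c j)
  have sign_sq : (-1 : ℝ) ^ p * (-1) ^ p = 1 := by rw [← mul_pow]; simp
  calc leviCivita h₁ (Fin.cons b c) j
      = permSign (k := p + q + 1) (Fin.cons b (Fin.append c j)) := by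
        rw [leviCivita, Fin.append_cons]; rfl
    _ = (-1) ^ p * permSign (k := p + q + 1)
          ((Fin.natAdd p (0 : Fin (q + 1))).insertNth b (Fin.append c j)) := by
        rw [sign_move, ← mul_assoc, Fin.val_natAdd, Fin.val_zero, add_zero, sign_sq, one_mul]
    _ = (-1) ^ p * leviCivita rfl c (Fin.cons b j) := by rw [← move]; rfl

theorem wedge_leviCivita (h₁ : p + 1 + q = n) (h₂ : p + (q + 1) = n) (v : Fin n → ℝ)
    (a : Fin (p + 1) → Fin n) (j : Fin (q + 1) → Fin n) :
    wedge v (leviCivita h₁ a) j = (-1) ^ p * wedge v (fun c => leviCivita h₂ c j) a := by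
  subst h₁
  have schouten : ∑ m : Fin (p + 1 + (q + 1)), (-1 : ℝ) ^ (m : ℕ) * (v (Fin.append a j m) *
      permSign fun i => Fin.append a j (Fin.succAbove (n := p + 1 + q) m i)) = 0 :=
    congrFun (wedge_permSign v) (Fin.append (m := p + 1) (n := q + 1) a j)
  rw [Fin.sum_univ_add] at schouten
  simp only [Fin.append_left, Fin.append_right, append_natAdd_succAbove,
    append_castAdd_succAbove h₂.symm, Fin.val_castAdd, Fin.val_natAdd] at schouten
  simp only [pow_add, mul_assoc, ← mul_sum] at schouten
  simp only [wedge, uncurryAlt, leviCivita, Fin.cast_refl, id]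
  rcases neg_one_pow_eq_or ℝ p with hp | hp <;> rw [hp] at schouten ⊢ <;> linarith

end LeviCivita

section CoordHodge

variable {n p q : ℕ}

/-- The Hodge dual without its metric factor: contraction of all indices of `A` with the
Levi-Civita symbol. -/
def coordHodge (h : p + q = n) (A : (Fin p → Fin n) → ℝ) : (Fin q → Fin n) → ℝ := fun idx =>
  1 / (p.factorial : ℝ) * ∑ a, A a * leviCivita h a idx

theorem coordHodge_congr {h : p + q = n} {A B : (Fin p → Fin n) → ℝ} {idx : Fin q → Fin n}
    (hAB : ∀ a, leviCivita h a idx ≠ 0 → A a = B a) : coordHodge h A idx = coordHodge h B idx := by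
  refine congrArg _ (sum_congr rfl fun a _ => ?_)
  by_cases ha : leviCivita h a idx = 0
  · rw [ha, mul_zero, mul_zero]
  · rw [hAB a ha]

theorem exists_leviCivita_ne_zero (h : p + q = n) {a : Fin p → Fin n}
    (ha : Function.Injective a) : ∃ j : Fin q → Fin n, leviCivita h a j ≠ 0 := by
  have card_compl : (univ.image a)ᶜ.card = q := by
    rw [card_compl, card_image_of_injective _ ha, card_univ, Fintype.card_fin, Fintype.card_fin]
    omega
  refine ⟨(univ.image a)ᶜ.orderEmbOfFin card_compl, leviCivita_ne_zero_iff.mpr ?_⟩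
  refine (Fintype.bijective_iff_injective_and_card _).mpr ⟨?_, by simpa using h⟩
  refine Fin.append_injective_iff.mpr ⟨ha, RelEmbedding.injective _, fun i l hil => ?_⟩
  have hl := orderEmbOfFin_mem _ card_compl l
  simp [← hil] at hl

theorem exists_perm_of_leviCivita_ne_zero {h : p + q = n} {a c : Fin p → Fin n}
    {j : Fin q → Fin n} (ha : leviCivita h a j ≠ 0) (hc : leviCivita h c j ≠ 0) :
    ∃ σ : Perm (Fin p), c ∘ σ = a := by
  obtain ⟨a_injective, -, a_ne_j⟩ :=
    Fin.append_injective_iff.mp (leviCivita_ne_zero_iff.mp ha).injective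
  have (i : Fin p) : ∃ l, c l = a i := by
    obtain ⟨l, hl⟩ := (leviCivita_ne_zero_iff.mp hc).surjective (a i)
    cases l using Fin.addCases with
    | left l => exact ⟨l, by rwa [Fin.append_left] at hl⟩
    | right l => exact (a_ne_j i l (by rw [← hl, Fin.append_right])).elim
  choose σ hσ using this
  have σ_injective : Function.Injective σ := fun i l hil =>
    a_injective (by rw [← hσ, ← hσ, hil])
  exact ⟨ofBijective σ (Finite.injective_iff_bijective.mp σ_injective), funext hσ⟩

theorem coordHodge_apply_of_ne_zero {h : p + q = n} {Y : (Fin p → Fin n) → ℝ} (hY : IsAlt Y)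
    {c : Fin p → Fin n} {j : Fin q → Fin n} (hcj : leviCivita h c j ≠ 0) :
    coordHodge h Y j = leviCivita h c j * Y c := by
  have c_injective : Function.Injective c :=
    (Fin.append_injective_iff.mp (leviCivita_ne_zero_iff.mp hcj).injective).1
  have term_eq (σ : Perm (Fin p)) :
      Y c * leviCivita h c j = Y (c ∘ σ) * leviCivita h (c ∘ σ) j := by
    have leviCivita_comp :
        leviCivita h (c ∘ σ) j = ((Perm.sign σ : ℤ) : ℝ) * leviCivita h c j :=
      isAlt_leviCivita h j c σ
    rw [hY, leviCivita_comp]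
    rcases Int.units_eq_one_or (Perm.sign σ) with hσ | hσ <;> simp [hσ]
  have sum_eq : ∑ _σ : Perm (Fin p), Y c * leviCivita h c j = ∑ a, Y a * leviCivita h a j := by
    refine sum_of_injOn (fun σ : Perm (Fin p) => c ∘ σ) ?_ (fun _ _ => mem_univ _) ?_ ?_
    · exact fun σ _ τ _ hστ => DFunLike.coe_injective (c_injective.comp_left hστ)
    · intro a _ ha
      refine mul_eq_zero_of_right _ (not_not.mp fun haj => ha ?_)
      obtain ⟨σ, hσ⟩ := exists_perm_of_leviCivita_ne_zero haj hcj
      exact ⟨σ, mem_univ _, hσ⟩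
    · exact fun σ _ => term_eq σ
  rw [coordHodge, ← sum_eq, sum_const, card_univ, Fintype.card_perm, Fintype.card_fin, nsmul_eq_mul]
  field_simp

theorem coordHodge_wedge (h₁ : p + 1 + q = n) (h₂ : p + (q + 1) = n) (v : Fin n → ℝ)
    (T : (Fin p → Fin n) → ℝ) (idx : Fin q → Fin n) :
    coordHodge h₁ (wedge v T) idx = (-1) ^ p * ∑ b, v b * coordHodge h₂ T (Fin.cons b idx) := by
  have contraction : ∑ a, wedge v T a * leviCivita h₁ a idx =
      (p + 1) * ∑ b, v b * ((-1) ^ p * ∑ c, T c * leviCivita h₂ c (Fin.cons b idx)) := by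
    simp only [mul_comm (wedge v T _), sum_mul_wedge (isAlt_leviCivita h₁ idx),
      leviCivita_cons h₁ h₂, mul_sum, mul_assoc, mul_comm (leviCivita h₂ _ _)]
  rw [coordHodge, contraction]
  simp only [coordHodge, mul_sum, Nat.factorial_succ]
  push_cast
  refine sum_congr rfl fun b _ => sum_congr rfl fun c _ => ?_
  field_simp

theorem uncurryAlt_coordHodge (h₁ : p + 1 + q = n) (h₂ : p + (q + 1) = n)
    {Q : Fin n → (Fin (p + 1) → Fin n) → ℝ} (hQ : ∀ b, IsAlt (Q b)) (j : Fin (q + 1) → Fin n) :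
    uncurryAlt (fun b => coordHodge h₁ (Q b)) j =
      (-1) ^ p * coordHodge h₂ (fun c => ∑ b, Q b (Fin.cons b c)) j := by
  have exchange : ∑ a, wedge (fun b => Q b a) (leviCivita h₁ a) j =
      (-1) ^ p * ((↑(p + 1) : ℝ) * ∑ b, ∑ c, Q b (Fin.cons b c) * leviCivita h₂ c j) := by
    simp only [wedge_leviCivita h₁ h₂, ← mul_sum, sum_wedge_apply hQ, Nat.cast_succ]
  calc uncurryAlt (fun b => coordHodge h₁ (Q b)) j
      = 1 / ((p + 1).factorial : ℝ) * ∑ a, wedge (fun b => Q b a) (leviCivita h₁ a) j := by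
        simp only [uncurryAlt, coordHodge, wedge, mul_sum]
        rw [sum_comm]
        exact sum_congr rfl fun a _ => sum_congr rfl fun m _ => by ring
    _ = (-1) ^ p * coordHodge h₂ (fun c => ∑ b, Q b (Fin.cons b c)) j := by
        rw [exchange, coordHodge, Nat.factorial_succ, sum_comm]
        simp only [sum_mul]
        push_cast
        field_simp

end CoordHodge

section Derivative

variable {n : ℕ} {f : Pt n → ℝ} {x : Pt n}

theorem pd_const_mul (c : ℝ) (hf : DifferentiableAt ℝ f x) (a : Fin n) :
    pd (fun y => c * f y) a x = c * pd f a x := by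
  rw [pd, fderiv_const_mul hf]
  rfl

theorem pd_sum {κ : Type*} {s : Finset κ} {f : κ → Pt n → ℝ}
    (hf : ∀ i ∈ s, DifferentiableAt ℝ (f i) x) (a : Fin n) :
    pd (fun y => ∑ i ∈ s, f i y) a x = ∑ i ∈ s, pd (f i) a x := by
  rw [pd, fderiv_fun_sum hf]
  exact sum_apply _ _ _

theorem IndepOfR.pd_eq_zero (hf : IndepOfR f) {a : Fin n} (ha : (a : ℕ) = 1) (x : Pt n) :
    pd f a x = 0 := by
  by_cases hfx : DifferentiableAt ℝ f x
  · have constant : (fun t : ℝ => f (x + t • Pi.single a 1)) = fun _ => f x := funext fun t =>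
      hf _ _ fun i hi => by simp [Fin.ext_iff, ha, hi]
    rw [pd, ← hfx.lineDeriv_eq_fderiv, lineDeriv, constant, deriv_const]
  · rw [pd, fderiv_zero_of_not_differentiableAt hfx]
    rfl

theorem IndepOfR.comp {α β : Type*} {f : Pt n → α} (hf : IndepOfR f) (φ : α → β) :
    IndepOfR fun x => φ (f x) :=
  fun x x' hx => congrArg φ (hf x x' hx)

variable {p q : ℕ}

theorem isAlt_pd {F : TensorField n p} (hF : ∀ c, Differentiable ℝ fun x => F x c)
    (hF_alt : IsAlternating F) (a : Fin n) (x : Pt n) : IsAlt fun c => pd (fun y => F y c) a x :=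
  fun c σ => by
  simp only [hF_alt _ c σ]
  exact pd_const_mul _ (hF c x) a

theorem extD_wedge {F : TensorField n p} (hF : ∀ c, Differentiable ℝ fun x => F x c)
    (v : Fin n → ℝ) (x : Pt n) : extD (fun y => wedge v (F y)) x = -wedge v (extD F x) := by
  have pd_wedge (b : Fin n) (c : Fin (p + 1) → Fin n) :
      pd (fun y => wedge v (F y) c) b x = wedge v (fun c => pd (fun y => F y c) b x) c := by
    simp only [wedge, uncurryAlt, ← mul_assoc]
    rw [pd_sum fun m _ => ((hF _).const_mul _) x]
    exact sum_congr rfl fun m _ => pd_const_mul _ (hF _ x) b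
  calc extD (fun y => wedge v (F y)) x
      = uncurryAlt fun b => wedge v fun c => pd (fun y => F y c) b x :=
        congrArg uncurryAlt (funext₂ pd_wedge)
    _ = -wedge v (extD F x) := (neg_eq_iff_eq_neg.mpr (wedge_uncurryAlt v _)).symm

theorem extD_const_mul {F : TensorField n p} (hF : ∀ c, Differentiable ℝ fun x => F x c)
    (a : ℝ) (x : Pt n) (idx : Fin (p + 1) → Fin n) :
    extD (fun y c => a * F y c) x idx = a * extD F x idx := by
  simp only [extD, mul_sum, pd_const_mul a (hF _ x), mul_left_comm a]

theorem IndepOfR.extD_cons {F : TensorField n (p + 1)} (hF : IndepOfR F) {a : Fin n}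
    (ha : (a : ℕ) = 1) (x : Pt n) (v : Fin (p + 1) → Fin n) :
    extD F x (Fin.cons a v) = -extD (fun y c => F y (Fin.cons a c)) x v := by
  have pd_first : pd (fun y => F y v) a x = 0 := (hF.comp fun T => T v).pd_eq_zero ha x
  have delete_succ (l : Fin (p + 1)) : (fun i => (Fin.cons a v : Fin (p + 2) → Fin n)
      (l.succ.succAbove i)) = Fin.cons a fun i => v (l.succAbove i) := by
    ext i
    cases i using Fin.cases <;> simp
  rw [extD, Fin.sum_univ_succ]
  simp only [Fin.cons_zero, Fin.cons_succ, Fin.zero_succAbove, pd_first, delete_succ]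
  simp [extD, pow_succ]

/-- The coordinate divergence `R^{b c}{}_{,b}`. -/
def divergence (R : TensorField n (p + 1)) : TensorField n p := fun x c =>
  ∑ b, pd (fun y => R y (Fin.cons b c)) b x

theorem isAlt_divergence {R : TensorField n (p + 1)} (hR : ∀ c, Differentiable ℝ fun x => R x c)
    (hR_alt : IsAlternating R) (x : Pt n) : IsAlt (divergence R x) :=
  IsAlt.sum fun b _ => (isAlt_pd hR hR_alt b x).comp_cons b

theorem extD_coordHodge (h₁ : p + 1 + q = n) (h₂ : p + (q + 1) = n) {R : TensorField n (p + 1)}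
    (hR : ∀ c, Differentiable ℝ fun x => R x c) (hR_alt : IsAlternating R) (x : Pt n)
    (j : Fin (q + 1) → Fin n) :
    extD (fun y => coordHodge h₁ (R y)) x j = (-1) ^ p * coordHodge h₂ (divergence R x) j := by
  have pd_coordHodge (b : Fin n) (c : Fin q → Fin n) :
      pd (fun y => coordHodge h₁ (R y) c) b x =
        coordHodge h₁ (fun a => pd (fun y => R y a) b x) c := by
    simp only [coordHodge, mul_comm _ (leviCivita h₁ _ c)]
    rw [pd_const_mul _ (DifferentiableAt.fun_sum fun a _ => ((hR a).const_mul _) x),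
      pd_sum fun a _ => ((hR a).const_mul _) x]
    exact congrArg _ (sum_congr rfl fun a _ => pd_const_mul _ (hR a x) b)
  calc extD (fun y => coordHodge h₁ (R y)) x j
      = uncurryAlt (fun b => coordHodge h₁ fun a => pd (fun y => R y a) b x) j :=
        congrArg (uncurryAlt · j) (funext₂ pd_coordHodge)
    _ = (-1) ^ p * coordHodge h₂ (divergence R x) j :=
        uncurryAlt_coordHodge h₁ h₂ (fun b => isAlt_pd hR hR_alt b x) j

end Derivative

section Closed

variable {m q : ℕ}

theorem duWedge_eq_wedge {n : ℕ} [NeZero n] (f : TensorField n q) (x : Pt n) :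
    duWedge f x = wedge (Pi.single 0 1) (f x) := by
  ext idx
  simp only [duWedge, wedge, uncurryAlt, Pi.single_apply, Fin.ext_iff, Fin.val_zero, mul_assoc]

theorem wedge_single_cons {ι : Type*} [DecidableEq ι] {k : ℕ} {a : ι} {v : Fin k → ι}
    (hv : ∀ i, v i ≠ a) (T : (Fin k → ι) → ℝ) :
    wedge (Pi.single a 1) T (Fin.cons a v) = T v := by
  simp [wedge, uncurryAlt, Fin.sum_univ_succ, Pi.single_apply, hv]

theorem IndepOfR.pd_eq_pdT_add {f : Pt (m + 2) → ℝ} (hf : IndepOfR f) (a : Fin (m + 2))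
    (x : Pt (m + 2)) : pd f a x = pdT f a x + Pi.single (M := fun _ => ℝ) 0 1 a * pd f 0 x := by
  cases a using Fin.cases with
  | zero => simp [pdT]
  | succ a =>
    cases a using Fin.cases with
    | zero => simp [pdT, hf.pd_eq_zero]
    | succ a => simp [pdT]

/-- The exterior derivative along the transverse coordinates only, whose vanishing is
`TransClosed`. -/
def transExtD {n : ℕ} (f : TensorField n q) : TensorField n (q + 1) := fun x =>
  uncurryAlt fun b c => pdT (fun y => f y c) b x

/-- Only components with all indices transverse (`≥ 2`) may be nonzero. -/
def IsTransverse {n k : ℕ} (T : (Fin k → Fin n) → ℝ) : Prop :=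
  ∀ v, (∃ i, (v i : ℕ) < 2) → T v = 0

theorem isTransverse_transExtD {n : ℕ} {f : TensorField n q} (hf : ∀ x, IsTransverse (f x))
    (x : Pt n) : IsTransverse (transExtD f x) := by
  rintro v ⟨i, hi⟩
  rw [transExtD, uncurryAlt]
  refine sum_eq_zero fun l _ => mul_eq_zero_of_right _ ?_
  rcases eq_or_ne i l with rfl | hil
  · exact if_neg hi.not_ge
  · obtain ⟨i, rfl⟩ := Fin.exists_succAbove_eq hil
    have vanishing : (fun y => f y fun i => v (l.succAbove i)) = 0 :=
      funext fun y => hf y _ ⟨i, hi⟩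
    simp [pdT, pd, vanishing]

theorem transClosed_iff {n : ℕ} {f : TensorField n q} (hf : ∀ x, IsTransverse (f x)) :
    TransClosed f ↔ ∀ x, transExtD f x = 0 := by
  have agree (x : Pt n) {v : Fin (q + 1) → Fin n} (hv : ∀ i, 2 ≤ (v i : ℕ)) :
      transExtD f x v = ∑ l : Fin (q + 1), (-1 : ℝ) ^ (l : ℕ) *
        pd (fun y => f y fun i => v (l.succAbove i)) (v l) x := by
    simp only [transExtD, uncurryAlt, pdT, hv, if_true]
  refine ⟨fun h x => funext fun v => ?_, fun h x v hv => by rw [← agree x hv, h, Pi.zero_apply]⟩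
  by_cases hv : ∃ i, (v i : ℕ) < 2
  · exact isTransverse_transExtD hf x v hv
  · push Not at hv
    exact (agree x hv).trans (h x v hv)

theorem extD_duWedge {f : TensorField (m + 2) q} (hf : ∀ c, Differentiable ℝ fun x => f x c)
    (hf_r : IndepOfR f) (x : Pt (m + 2)) :
    extD (duWedge f) x = -wedge (Pi.single 0 1) (transExtD f x) := by
  have extD_eq : extD f x =
      transExtD f x + wedge (Pi.single 0 1) fun c => pd (fun y => f y c) 0 x := by
    ext idx
    simp only [Pi.add_apply, transExtD, wedge, uncurryAlt, ← sum_add_distrib, ← mul_add]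
    exact sum_congr rfl fun l _ => congrArg _ ((hf_r.comp fun T => T _).pd_eq_pdT_add _ x)
  rw [funext (duWedge_eq_wedge f), extD_wedge hf, extD_eq, wedge_add, wedge_wedge_self, add_zero]

theorem extD_duWedge_eq_zero_iff {f : TensorField (m + 2) q}
    (hf : ∀ c, Differentiable ℝ fun x => f x c) (hf_tr : ∀ x, IsTransverse (f x))
    (hf_r : IndepOfR f) : (∀ x idx, extD (duWedge f) x idx = 0) ↔ TransClosed f := by
  rw [transClosed_iff hf_tr]
  simp only [extD_duWedge hf hf_r]
  refine ⟨fun h x => funext fun v => ?_, fun h x idx => by simp [h, wedge, uncurryAlt]⟩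
  by_cases hv : ∃ i, (v i : ℕ) < 2
  · exact isTransverse_transExtD hf_tr x v hv
  · have v_ne_zero (i) : v i ≠ 0 := fun hi => hv ⟨i, by simp [hi]⟩
    rw [← wedge_single_cons v_ne_zero (transExtD f x)]
    exact neg_eq_zero.mp (h x (Fin.cons 0 v))

end Closed

section RaiseAll

variable {n k : ℕ} {g : MetricField n}

theorem raiseAll_wedge (α : Fin n → ℝ) (f : TensorField n k) (x : Pt n) :
    raiseAll g (fun y => wedge α (f y)) x =
      wedge (Matrix.mulVec (g x)⁻¹ α) (raiseAll g f x) := by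
  ext idx
  have deletion (m : Fin (k + 1)) :
      ∑ j : Fin (k + 1) → Fin n, (∏ i, (g x)⁻¹ (idx i) (j i)) *
          ((-1) ^ (m : ℕ) * (α (j m) * f x fun i => j (m.succAbove i))) =
        (-1) ^ (m : ℕ) * (Matrix.mulVec (g x)⁻¹ α (idx m) *
          raiseAll g f x fun i => idx (m.succAbove i)) := by
    simp only [sum_insertNth m, Fin.prod_univ_succAbove _ m, Fin.insertNth_apply_same,
      Fin.insertNth_apply_succAbove, Matrix.mulVec, dotProduct, raiseAll, sum_mul_sum]
    simp only [mul_sum]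
    exact sum_congr rfl fun b _ => sum_congr rfl fun c _ => by ring
  rw [raiseAll]
  simp only [wedge, uncurryAlt, mul_sum]
  rw [sum_comm]
  exact sum_congr rfl fun m _ => deletion m

theorem isAlternating_raiseAll {f : TensorField n k} (hf : IsAlternating f) :
    IsAlternating (raiseAll g f) := fun x idx σ => by
  simp only [raiseAll, mul_sum]
  rw [← (σ.arrowCongr (Equiv.refl (Fin n))).symm.sum_comp]
  refine sum_congr rfl fun j _ => ?_
  have reindex : (σ.arrowCongr (Equiv.refl (Fin n))).symm j = j ∘ σ := rfl
  have prod_eq : ∏ m, (g x)⁻¹ ((idx ∘ σ) m) ((j ∘ σ) m) = ∏ m, (g x)⁻¹ (idx m) (j m) :=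
    Equiv.prod_comp σ fun m => (g x)⁻¹ (idx m) (j m)
  rw [reindex, hf, prod_eq]
  ring

end RaiseAll

section MatrixCalculus

variable {E : Type*} [NormedAddCommGroup E] [NormedSpace ℝ E] {ι : Type*} [Fintype ι]
  [DecidableEq ι] {A : E → Matrix ι ι ℝ}

theorem differentiable_det (hA : ∀ a b, Differentiable ℝ fun x => A x a b) :
    Differentiable ℝ fun x => (A x).det := by
  simp only [Matrix.det_apply']
  refine Differentiable.fun_sum fun σ _ => Differentiable.const_mul (fun x => ?_) _
  exact (HasFDerivAt.finsetProd fun i _ => (hA (σ i) i x).hasFDerivAt).differentiableAt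

theorem differentiable_inv_apply (hA : ∀ a b, Differentiable ℝ fun x => A x a b)
    (hdet : ∀ x, (A x).det ≠ 0) (a b : ι) : Differentiable ℝ fun x => (A x)⁻¹ a b := by
  simp only [Matrix.inv_def, Matrix.smul_apply, Ring.inverse_eq_inv', smul_eq_mul,
    Matrix.adjugate_apply]
  refine ((differentiable_det hA).inv hdet).mul (differentiable_det fun i j => ?_)
  simp only [Matrix.updateRow_apply]
  split_ifs
  · exact differentiable_const _
  · exact hA i j

end MatrixCalculus

section TransverseMetric

variable {n : ℕ} {hT : MetricField n}

theorem IsTransverseMetric.det_pos (h : IsTransverseMetric hT)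
    (x : Pt n) : 0 < (hT x).det :=
  (h.2.2.2.2 x).det_pos

theorem IsTransverseMetric.inv_apply (h : IsTransverseMetric hT) (x : Pt n) {a : Fin n}
    (ha : (a : ℕ) < 2) (b : Fin n) :
    (hT x)⁻¹ a b = if a = b then 1 else 0 := by
  have hdet : IsUnit (hT x).det := (h.det_pos x).ne'.isUnit
  have row : hT x a = Pi.single a 1 := funext fun c => by
    simp [h.1 x a c (Or.inl ha), Pi.single_apply, eq_comm]
  have h_mul := congrFun (congrFun (Matrix.mul_nonsing_inv (hT x) hdet) a) b
  rwa [Matrix.mul_apply, row, Fintype.sum_eq_single a fun c hc => by simp [hc], Pi.single_eq_same,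
    one_mul, Matrix.one_apply] at h_mul

end TransverseMetric

section KundtMetric

variable {m : ℕ} {H : Pt (m + 2) → ℝ} {W : Pt (m + 2) → Fin (m + 2) → ℝ}
  {hT : MetricField (m + 2)}

/-- The 1-form `H du + W_α dx^α` of `ds² = 2 du (dr + H du + W_α dx^α) + g_{αβ} dx^α dx^β`. -/
def kundtForm (H : Pt (m + 2) → ℝ) (W : Pt (m + 2) → Fin (m + 2) → ℝ) (x : Pt (m + 2)) :
    Fin (m + 2) → ℝ :=
  Fin.cons (H x) (Fin.cons 0 fun a => W x a.succ.succ)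

theorem kundtForm_one (x : Pt (m + 2)) : kundtForm H W x 1 = 0 := rfl

theorem kundtMetric_eq (h : IsTransverseMetric hT) (x : Pt (m + 2)) :
    kundtMetric H W hT x = (hT x).submatrix (swap 0 1) id +
      Matrix.vecMulVec (kundtForm H W x) (Pi.single 0 1) +
      Matrix.vecMulVec (Pi.single 0 1) (kundtForm H W x) := by
  have one_ne (a : Fin m) : (1 : Fin (m + 2)) ≠ a.succ.succ := by simp [Fin.ext_iff]
  have zero_ne (a : Fin m) : (0 : Fin (m + 2)) ≠ a.succ.succ := by simp [Fin.ext_iff]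
  have swap_eq (a : Fin m) : swap 0 1 a.succ.succ = a.succ.succ :=
    swap_apply_of_ne_of_ne (zero_ne a).symm (one_ne a).symm
  ext a b
  simp only [Matrix.add_apply, Matrix.vecMulVec_apply, Matrix.submatrix_apply, id]
  cases a using Fin.cases with
  | zero =>
    cases b using Fin.cases with
    | zero => simp [kundtMetric, kundtForm, h.1, two_mul]
    | succ b => cases b using Fin.cases <;> simp [kundtMetric, kundtForm, h.1, one_ne]
  | succ a =>
    cases a using Fin.cases with
    | zero =>
      cases b using Fin.cases with
      | zero => simp [kundtMetric, kundtForm, h.1]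
      | succ b => cases b using Fin.cases <;> simp [kundtMetric, kundtForm, h.1, zero_ne]
    | succ a =>
      cases b using Fin.cases with
      | zero => simp [kundtMetric, kundtForm, h.1, swap_eq]
      | succ b => cases b using Fin.cases <;> simp [kundtMetric, h.1, swap_eq, (one_ne a).symm]

theorem det_kundtMetric (h : IsTransverseMetric hT) (x : Pt (m + 2)) :
    (kundtMetric H W hT x).det = -(hT x).det := by
  let M : Matrix (Fin (m + 2)) (Fin (m + 2)) ℝ := (hT x).submatrix (swap 0 1) id
  let shear : Matrix (Fin (m + 2)) (Fin (m + 2)) ℝ :=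
    1 + Matrix.vecMulVec (kundtForm H W x) (Pi.single 1 1)
  have column : Matrix.mulVec M (Pi.single 1 1) = Pi.single 0 1 := by
    ext a
    rcases eq_or_ne (swap 0 1 a) 1 with ha | ha
    · obtain rfl : a = 0 := by simpa using (swap_apply_eq_iff.mp ha)
      simp [M, h.1]
    · have ha_ne : a ≠ 0 := by
        rintro rfl
        simp at ha
      simp [M, h.1, ha, ha_ne]
  have row : Matrix.vecMul (Pi.single 1 1) M = Pi.single 0 1 := by
    ext b
    simp [M, h.1, Pi.single_apply, eq_comm]
  have factorisation : kundtMetric H W hT x = shear * M * shear.transpose := by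
    simp only [shear, Matrix.add_mul, Matrix.mul_add, Matrix.one_mul, Matrix.mul_one,
      Matrix.transpose_add, Matrix.transpose_one, Matrix.transpose_vecMulVec,
      Matrix.vecMulVec_mul, Matrix.mul_vecMulVec, Matrix.add_mulVec, Matrix.vecMulVec_mulVec,
      row, column, kundtMetric_eq h, M]
    simp
  have det_shear : shear.det = 1 := by
    simp only [shear, Matrix.vecMulVec_eq Unit, Matrix.det_one_add_replicateCol_mul_replicateRow]
    simp [kundtForm_one]
  have det_swap : M.det = -(hT x).det := by
    rw [Matrix.det_permute, Perm.sign_swap (by simp)]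
    simp
  rw [factorisation, Matrix.det_mul, Matrix.det_mul, Matrix.det_transpose, det_shear, det_swap]
  ring

theorem isUnit_det_kundtMetric (h : IsTransverseMetric hT) (x : Pt (m + 2)) :
    IsUnit (kundtMetric H W hT x).det := by
  rw [det_kundtMetric h]
  exact (neg_ne_zero.mpr (h.det_pos x).ne').isUnit

theorem kundtMetric_mulVec (h : IsTransverseMetric hT) (x : Pt (m + 2)) (u : Fin (m + 2) → ℝ) :
    Matrix.mulVec (kundtMetric H W hT x) u = Matrix.mulVec (hT x) u ∘ swap 0 1 +
      u 0 • kundtForm H W x + (kundtForm H W x ⬝ᵥ u) • Pi.single 0 1 := by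
  have permuted : Matrix.mulVec ((hT x).submatrix (swap 0 1) id) u =
      Matrix.mulVec (hT x) u ∘ swap 0 1 := rfl
  rw [kundtMetric_eq h, Matrix.add_mulVec, Matrix.add_mulVec, permuted, Matrix.vecMulVec_mulVec,
    Matrix.vecMulVec_mulVec, single_one_dotProduct, op_smul_eq_smul, op_smul_eq_smul]

theorem kundtMetric_inv_mulVec_du (h : IsTransverseMetric hT) (x : Pt (m + 2)) :
    Matrix.mulVec (kundtMetric H W hT x)⁻¹ (Pi.single 0 1) = Pi.single 1 1 := by
  have lower_r : Matrix.mulVec (kundtMetric H W hT x) (Pi.single 1 1) = Pi.single 0 1 := by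
    ext a
    cases a using Fin.cases <;> simp [kundtMetric]
  rw [← lower_r, Matrix.mulVec_mulVec, Matrix.nonsing_inv_mul _ (isUnit_det_kundtMetric h x),
    Matrix.one_mulVec]

theorem kundtMetric_inv_apply (h : IsTransverseMetric hT) (x : Pt (m + 2)) {a j : Fin (m + 2)}
    (ha : a ≠ 1) (hj : 2 ≤ (j : ℕ)) :
    (kundtMetric H W hT x)⁻¹ a j = (hT x)⁻¹ a j := by
  let u : Fin (m + 2) → ℝ := Matrix.mulVec (hT x)⁻¹ (Pi.single j 1)
  have u_apply (c : Fin (m + 2)) : u c = (hT x)⁻¹ c j := by simp [u]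
  have j_ne_zero : j ≠ 0 := by
    rintro rfl
    simp at hj
  have j_ne_one : j ≠ 1 := by
    rintro rfl
    simp at hj
  have swap_j : swap 0 1 j = j := swap_apply_of_ne_of_ne j_ne_zero j_ne_one
  have u_zero : u 0 = 0 := by
    rw [u_apply, h.inv_apply x (by simp), if_neg j_ne_zero.symm]
  have hT_u : Matrix.mulVec (hT x) u = Pi.single j 1 := by
    rw [Matrix.mulVec_mulVec, Matrix.mul_nonsing_inv _ (h.det_pos x).ne'.isUnit,
      Matrix.one_mulVec]
  have metric_u : Matrix.mulVec (kundtMetric H W hT x) u =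
      Pi.single j 1 + (kundtForm H W x ⬝ᵥ u) • Pi.single 0 1 := by
    rw [kundtMetric_mulVec h, hT_u, u_zero, zero_smul, add_zero]
    congr 1
    ext a
    simp [Pi.single_apply, swap_apply_eq_iff, swap_j]
  have inv_metric_u : u = Matrix.mulVec (kundtMetric H W hT x)⁻¹ (Pi.single j 1) +
      (kundtForm H W x ⬝ᵥ u) • Pi.single 1 1 := by
    rw [← kundtMetric_inv_mulVec_du (H := H) (W := W) h x, ← Matrix.mulVec_smul,
      ← Matrix.mulVec_add, ← metric_u, Matrix.mulVec_mulVec,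
      Matrix.nonsing_inv_mul _ (isUnit_det_kundtMetric h x), Matrix.one_mulVec]
  have h_apply := congrFun inv_metric_u a
  simpa [u_apply, ha] using h_apply.symm

end KundtMetric

section DensitizedRaise

variable {n k : ℕ} {hT : MetricField n} {f : TensorField n k}

/-- The tensor density `√g̃ f^{α₁…α_k}`, whose coordinate divergence is the effective co-closedness
equation. -/
def densitizedRaise (hT : MetricField n) (f : TensorField n k) : TensorField n k := fun x v =>
  Real.sqrt (hT x).det * raiseAll hT f x v

theorem differentiable_densitizedRaise (h : IsTransverseMetric hT)
    (hf : ∀ c, Differentiable ℝ fun x => f x c) (v : Fin k → Fin n) :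
    Differentiable ℝ fun x => densitizedRaise hT f x v := by
  have hT_diff (a b : Fin n) : Differentiable ℝ fun x => hT x a b :=
    (h.2.2.1 a b).differentiable (by simp)
  have det_ne_zero (x : Pt n) : (hT x).det ≠ 0 := (h.det_pos x).ne'
  have inv_diff (a b : Fin n) : Differentiable ℝ fun x => (hT x)⁻¹ a b :=
    differentiable_inv_apply hT_diff det_ne_zero a b
  refine ((differentiable_det hT_diff).sqrt det_ne_zero).mul
    (Differentiable.fun_sum fun j _ => Differentiable.mul (fun x => ?_) (hf j))
  exact (HasFDerivAt.finsetProd fun i _ => (inv_diff (v i) (j i) x).hasFDerivAt).differentiableAt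

theorem isAlternating_densitizedRaise (hf : IsAlternating f) :
    IsAlternating (densitizedRaise hT f) :=
  fun x => IsAlt.const_mul (isAlternating_raiseAll hf x) _

theorem indepOfR_densitizedRaise (h : IndepOfR hT) (hf : IndepOfR f) :
    IndepOfR (densitizedRaise hT f) := fun x x' hx => by
  ext v
  simp only [densitizedRaise, raiseAll, h x x' hx, hf x x' hx]

theorem isTransverse_densitizedRaise (h : IsTransverseMetric hT) {x : Pt n}
    (hf : IsTransverse (f x)) : IsTransverse (densitizedRaise hT f x) := by
  rintro v ⟨i, hi⟩
  refine mul_eq_zero_of_right _ (sum_eq_zero fun j _ => ?_)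
  by_cases hj : v i = j i
  · exact mul_eq_zero_of_right _ (hf j ⟨i, hj ▸ hi⟩)
  · exact mul_eq_zero_of_left (prod_eq_zero (mem_univ i) (by rw [h.inv_apply x hi, if_neg hj])) _

theorem densitizedRaise_kundtMetric {m : ℕ} {H : Pt (m + 2) → ℝ}
    {W : Pt (m + 2) → Fin (m + 2) → ℝ} {hT : MetricField (m + 2)} {f : TensorField (m + 2) k}
    (h : IsTransverseMetric hT) {x : Pt (m + 2)} (hf : IsTransverse (f x))
    {v : Fin k → Fin (m + 2)} (hv : ∀ i, v i ≠ 1) :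
    Real.sqrt |(kundtMetric H W hT x).det| * raiseAll (kundtMetric H W hT) f x v =
      densitizedRaise hT f x v := by
  have raise_eq : raiseAll (kundtMetric H W hT) f x v = raiseAll hT f x v := by
    refine sum_congr rfl fun j _ => ?_
    by_cases hj : ∃ i, (j i : ℕ) < 2
    · rw [hf j hj, mul_zero, mul_zero]
    · push Not at hj
      exact congrArg (· * f x j) (prod_congr rfl fun i _ => kundtMetric_inv_apply h x (hv i) (hj i))
  rw [raise_eq, det_kundtMetric h, abs_neg, abs_of_pos (h.det_pos x), densitizedRaise]

end DensitizedRaise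

section Coclosed

variable {m q r : ℕ} {H : Pt (m + 2) → ℝ} {W : Pt (m + 2) → Fin (m + 2) → ℝ}
  {hT : MetricField (m + 2)}

theorem hodge_duWedge (h₁ : q + 1 + r = m + 2) (h₂ : q + (r + 1) = m + 2)
    (h : IsTransverseMetric hT) {f : TensorField (m + 2) q} {x : Pt (m + 2)}
    (hf : IsTransverse (f x)) (idx : Fin r → Fin (m + 2)) :
    hodge h₁ (kundtMetric H W hT) (duWedge f) x idx =
      (-1) ^ q * coordHodge h₂ (densitizedRaise hT f x) (Fin.cons 1 idx) := by
  let vol : ℝ := Real.sqrt |(kundtMetric H W hT x).det|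
  let raised := raiseAll (kundtMetric H W hT) f x
  have raise_du : raiseAll (kundtMetric H W hT) (duWedge f) x = wedge (Pi.single 1 1) raised := by
    rw [funext (duWedge_eq_wedge f), raiseAll_wedge, kundtMetric_inv_mulVec_du h]
  have avoids_one {a : Fin q → Fin (m + 2)} (ha : leviCivita h₂ a (Fin.cons 1 idx) ≠ 0)
      (i : Fin q) : a i ≠ 1 :=
    (Fin.append_injective_iff.mp (leviCivita_ne_zero_iff.mp ha).injective).2.2 i 0
  calc hodge h₁ (kundtMetric H W hT) (duWedge f) x idx
      = coordHodge h₁ (wedge (Pi.single 1 1) fun a => vol * raised a) idx := by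
        simp only [hodge, raise_du, wedge_const_mul, coordHodge, leviCivita]
        exact congrArg _ (sum_congr rfl fun a _ => by ring)
    _ = (-1) ^ q * coordHodge h₂ (fun a => vol * raised a) (Fin.cons 1 idx) := by
        rw [coordHodge_wedge h₁ h₂, Fintype.sum_eq_single 1 fun b hb => by simp [hb]]
        simp
    _ = (-1) ^ q * coordHodge h₂ (densitizedRaise hT f x) (Fin.cons 1 idx) :=
        congrArg _ (coordHodge_congr fun a ha => densitizedRaise_kundtMetric h hf (avoids_one ha))

theorem extD_hodge_duWedge (h₁ : q + 1 + 1 + r = m + 2) (h₂ : q + (r + 1 + 1) = m + 2)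
    (h : IsTransverseMetric hT) {f : TensorField (m + 2) (q + 1)}
    (hf : ∀ c, Differentiable ℝ fun x => f x c) (hf_alt : IsAlternating f)
    (hf_tr : ∀ x, IsTransverse (f x)) (hf_r : IndepOfR f) (x : Pt (m + 2))
    (j : Fin (r + 1) → Fin (m + 2)) :
    extD (hodge h₁ (kundtMetric H W hT) (duWedge f)) x j =
      coordHodge h₂ (divergence (densitizedRaise hT f) x) (Fin.cons 1 j) := by
  have h₃ : q + 1 + (r + 1) = m + 2 := by omega
  let S : TensorField (m + 2) (r + 1) := fun y => coordHodge h₃ (densitizedRaise hT f y)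
  have S_diff (c : Fin (r + 1) → Fin (m + 2)) : Differentiable ℝ fun y => S y c :=
    Differentiable.const_mul (Differentiable.fun_sum fun a _ =>
      (differentiable_densitizedRaise h hf a).mul_const _) _
  have S_r : IndepOfR S := (indepOfR_densitizedRaise h.2.2.2.1 hf_r).comp (coordHodge h₃)
  have hodge_eq : hodge h₁ (kundtMetric H W hT) (duWedge f) =
      fun y idx => (-1) ^ (q + 1) * S y (Fin.cons 1 idx) :=
    funext₂ fun y idx => hodge_duWedge h₁ h₃ h (hf_tr y) idx
  have sign_sq : (-1 : ℝ) ^ q * (-1) ^ q = 1 := by rw [← mul_pow]; simp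
  calc extD (hodge h₁ (kundtMetric H W hT) (duWedge f)) x j
      = (-1) ^ (q + 1) * extD (fun y idx => S y (Fin.cons 1 idx)) x j := by
        rw [hodge_eq, extD_const_mul fun c => S_diff (Fin.cons 1 c)]
    _ = (-1) ^ q * extD S x (Fin.cons 1 j) := by
        rw [S_r.extD_cons (by simp), pow_succ]
        ring
    _ = coordHodge h₂ (divergence (densitizedRaise hT f) x) (Fin.cons 1 j) := by
        rw [extD_coordHodge h₃ h₂ (differentiable_densitizedRaise h hf)
          (isAlternating_densitizedRaise hf_alt), ← mul_assoc, sign_sq, one_mul]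

theorem isTransverse_divergence {n : ℕ} {R : TensorField n (q + 1)}
    (hR : ∀ x, IsTransverse (R x)) (x : Pt n) : IsTransverse (divergence R x) := by
  rintro v ⟨i, hi⟩
  refine sum_eq_zero fun b _ => ?_
  have vanishing : (fun y => R y (Fin.cons b v)) = 0 := funext fun y => hR y _ ⟨i.succ, hi⟩
  simp [pd, vanishing]

theorem transCoclosed_iff {n : ℕ} [NeZero n] {hT : MetricField n} {f : TensorField n (q + 1)} :
    TransCoclosed hT f ↔ ∀ x, divergence (densitizedRaise hT f) x = 0 := by
  have divergence_tail (x : Pt n) (v : Fin (q + 1) → Fin n) :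
      ∑ b, pd (fun y => densitizedRaise hT f y (Function.update v 0 b)) b x =
        divergence (densitizedRaise hT f) x (Fin.tail v) := by
    rw [← Fin.cons_self_tail v]
    simp only [Fin.update_cons_zero, Fin.tail_cons, divergence]
  refine ⟨fun h x => funext fun c => ?_, fun h x v => (divergence_tail x v).trans ?_⟩
  · rw [← Fin.tail_cons (α := fun _ => Fin n) 0 c, ← divergence_tail]
    exact h x _
  · rw [h, Pi.zero_apply]

theorem eq_zero_of_coordHodge_cons_one_eq_zero {h₂ : q + (r + 1) = m + 2}
    {Y : (Fin q → Fin (m + 2)) → ℝ} (hY : IsAlt Y) (hY_tr : IsTransverse Y)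
    (hY_zero : ∀ j : Fin r → Fin (m + 2), coordHodge h₂ Y (Fin.cons 1 j) = 0) : Y = 0 := by
  ext c
  by_cases hc : Function.Injective (Fin.cons 1 c : Fin (q + 1) → Fin (m + 2))
  · obtain ⟨j, hj⟩ := exists_leviCivita_ne_zero (q := r) (by omega) hc
    rw [leviCivita_cons _ h₂] at hj
    have hcj := right_ne_zero_of_mul hj
    have h := hY_zero j
    rw [coordHodge_apply_of_ne_zero hY hcj] at h
    exact (mul_eq_zero.mp h).resolve_left hcj
  · rw [Fin.cons_injective_iff, not_and_or, not_not] at hc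
    rcases hc with ⟨i, hi⟩ | hc
    · exact hY_tr c ⟨i, by simp [hi]⟩
    · exact hY.eq_zero_of_not_injective hc

theorem extD_hodge_duWedge_eq_zero_iff (h₁ : q + 1 + 1 + r = m + 2) (h : IsTransverseMetric hT)
    {f : TensorField (m + 2) (q + 1)} (hf : ∀ c, Differentiable ℝ fun x => f x c)
    (hf_alt : IsAlternating f) (hf_tr : ∀ x, IsTransverse (f x)) (hf_r : IndepOfR f) :
    (∀ x j, extD (hodge h₁ (kundtMetric H W hT) (duWedge f)) x j = 0) ↔ TransCoclosed hT f := by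
  have h₂ : q + (r + 1 + 1) = m + 2 := by omega
  rw [transCoclosed_iff]
  simp only [extD_hodge_duWedge h₁ h₂ h hf hf_alt hf_tr hf_r]
  refine ⟨fun h_extD x => ?_, fun h_div x j => by simp [h_div, coordHodge]⟩
  exact eq_zero_of_coordHodge_cons_one_eq_zero
    (isAlt_divergence (differentiable_densitizedRaise h hf)
      (isAlternating_densitizedRaise hf_alt) x)
    (isTransverse_divergence (fun y => isTransverse_densitizedRaise h (hf_tr y)) x) (h_extD x)

end Coclosed

section ChernSimons

variable {n k l : ℕ} {c : Fin n}

/-- Every component of `T` without an index `c` vanishes: `T` is divisible by `dx^c`. -/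
def HasFactor (c : Fin n) (T : TensorField n k) : Prop :=
  ∀ x idx, (∀ i, idx i ≠ c) → T x idx = 0

theorem hasFactor_duWedge [NeZero n] (f : TensorField n k) : HasFactor 0 (duWedge f) :=
  fun x idx hidx => by
  rw [duWedge_eq_wedge, wedge, uncurryAlt]
  exact sum_eq_zero fun m _ => by simp [hidx m]

theorem hasFactor_wedgeP (F : TensorField n k) {G : TensorField n l} (hG : HasFactor c G) :
    HasFactor c (wedgeP F G) := fun x _ hidx =>
  sum_eq_zero fun _ _ => mul_eq_zero_of_right _ (hG x _ fun _ => hidx _)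

theorem isAlternating_wedgeP (F : TensorField n k) (G : TensorField n l) :
    IsAlternating (wedgeP F G) := fun x idx τ => by
  simp only [wedgeP, mul_sum]
  refine Fintype.sum_equiv (Equiv.mulLeft τ) _ _ fun σ => ?_
  rcases Int.units_eq_one_or (Perm.sign τ) with hτ | hτ <;> simp [hτ]

theorem wedgeP_eq_zero {F : TensorField n k} {G : TensorField n l} (hF : HasFactor c F)
    (hG : HasFactor c G) : wedgeP F G = 0 := by
  ext x idx
  by_cases hidx : Function.Injective idx
  · refine sum_eq_zero fun σ _ => ?_
    by_cases hc : ∃ i, idx (σ (Fin.castAdd l i)) = c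
    · obtain ⟨i, hi⟩ := hc
      refine mul_eq_zero_of_right _ (hG x _ fun j hj => ?_)
      have h := σ.injective (hidx (hi.trans hj.symm))
      simp [Fin.ext_iff] at h
      omega
    · push Not at hc
      exact mul_eq_zero_of_left (mul_eq_zero_of_right _ (hF x _ hc)) _
  · exact IsAlt.eq_zero_of_not_injective (isAlternating_wedgeP F G x) hidx

theorem wedgePow_eq_zero {F : TensorField n k} (hF : HasFactor c F) {j : ℕ} (hj : 2 ≤ j) :
    wedgePow F j = 0 := by
  obtain ⟨j, rfl⟩ := Nat.exists_eq_add_of_le' hj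
  exact wedgeP_eq_zero (hasFactor_wedgeP _ hF) hF

end ChernSimons

theorem chern_simons_immunity_general {n q r : ℕ} [NeZero q] (hn : (q + 1) + r = n)
    {H : Pt n → ℝ} {W : Pt n → Fin n → ℝ} {hT : MetricField n} (h_hT : IsTransverseMetric hT)
    {f : TensorField n q} (hf : ∀ c, Differentiable ℝ fun x => f x c) (hf_alt : IsAlternating f)
    (hf_tr : ∀ x, IsTransverse (f x)) (hf_r : IndepOfR f) {k : ℕ} (hk : 2 ≤ k) (μ : ℝ)
    (hrank : (q + 1) * k = r + 1) :
    ((∀ x idx, extD (duWedge f) x idx = 0) ∧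
      (∀ x idx, extD (hodge hn (kundtMetric H W hT) (duWedge f)) x idx
        + μ * castT hrank (wedgePow (duWedge f) k) x idx = 0))
    ↔ (TransClosed f ∧ TransCoclosed hT f) := by
  obtain ⟨m, rfl⟩ : ∃ m, n = m + 2 := Nat.exists_eq_add_of_le' (by have := NeZero.pos q; omega)
  obtain ⟨q, rfl⟩ := Nat.exists_eq_succ_of_ne_zero (NeZero.ne q)
  have chern_simons_zero : wedgePow (duWedge f) k = 0 := wedgePow_eq_zero (hasFactor_duWedge f) hk
  simp only [chern_simons_zero, castT, Pi.zero_apply, mul_zero, add_zero]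
  exact and_congr (extD_duWedge_eq_zero_iff hf hf_tr hf_r)
    (extD_hodge_duWedge_eq_zero_iff hn h_hT hf hf_alt hf_tr hf_r)

/-- the effective transverse Maxwell equations satisfied by a VSI
`p`-form Maxwell field are unchanged by adding a (non-linear, i.e. `k ≥ 2`)
Chern–Simons term `μ F ∧ … ∧ F` to the field equations. -/
theorem chern_simons_immunity {n q s : ℕ} [NeZero n] [NeZero q]
    (hn : (q+1) + (s+1) = n)
    (D : DegKundtData n) (hD : D.Regular)
    (f : TensorField n q) (hf_sm : IsSmoothT f) (hf_alt : IsAlternating f)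
    (hf_tr : ∀ (x : Pt n) (v : Fin q → Fin n), (∃ i, (v i : ℕ) < 2) → f x v = 0)
    (hf_r : IndepOfR f)
    (k : ℕ) (hk : 2 ≤ k) (μ : ℝ) (hrank : (q+1) * k = (s+1) + 1) :
    ((∀ x idx, extD (duWedge f) x idx = 0) ∧
      (∀ x idx, extD (hodge hn D.metric (duWedge f)) x idx
        + μ * castT hrank (wedgePow (duWedge f) k) x idx = 0))
    ↔ (TransClosed f ∧ TransCoclosed D.hT f) :=
  chern_simons_immunity_general hn hD.1 (fun c => (hf_sm c).differentiable (by simp)) hf_alt hf_tr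
    hf_r hk μ hrank

end VSI
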